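/- arXiv:math/0511730 — 5 statements merged into one kernel-verified Lean document; each statement's English description precedes it below -/
import Mathlib

section
/- In the monoid T, the following consequences of the defining relations hold: (i) σ_i θ_j σ_i = σ_j θ_i σ_j and θ_i σ_j θ_i = θ_i whenever |i−j| = 1; and (ii) σ_i σ_{i+1} θ_i θ_{i+2} = σ_{i+2} σ_{i+1} θ_i θ_{i+2} for all 1 ≤ i ≤ n−3. -/
/-!
The Brauer monoid presentation from Kudryavtseva–Mazorchuk,
"On presentations of Brauer-type monoids", Section 3.

Generators: `Sum.inl i` represents `σ_{i+1}` and `Sum.inr i` represents `θ_{i+1}`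
for `i : Fin (n-1)` (so the paper's indices `1, …, n-1` correspond to `i.val + 1`).
-/

/-- Generator type: `Sum.inl i` is `σ_{i+1}`, `Sum.inr i` is `θ_{i+1}`. -/
abbrev BrauerGen (n : ℕ) := Fin (n - 1) ⊕ Fin (n - 1)

/-- The word `σ_{i+1}` in the free monoid. -/
def fσ {n : ℕ} (i : Fin (n - 1)) : FreeMonoid (BrauerGen n) := FreeMonoid.of (Sum.inl i)

/-- The word `θ_{i+1}` in the free monoid. -/
def fθ {n : ℕ} (i : Fin (n - 1)) : FreeMonoid (BrauerGen n) := FreeMonoid.of (Sum.inr i)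

/-- The defining relations of the presentation of the Brauer monoid `𝔅_n`. -/
inductive BrauerRel (n : ℕ) : FreeMonoid (BrauerGen n) → FreeMonoid (BrauerGen n) → Prop
  | sigma_sq (i) : BrauerRel n (fσ i * fσ i) 1
  | sigma_comm (i j) (h : 1 < Nat.dist i.1 j.1) : BrauerRel n (fσ i * fσ j) (fσ j * fσ i)
  | braid (i j) (h : Nat.dist i.1 j.1 = 1) :
      BrauerRel n (fσ i * fσ j * fσ i) (fσ j * fσ i * fσ j)
  | theta_idem (i) : BrauerRel n (fθ i * fθ i) (fθ i)
  | theta_comm (i j) (h : 1 < Nat.dist i.1 j.1) : BrauerRel n (fθ i * fθ j) (fθ j * fθ i)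
  | theta_theta_theta (i j) (h : Nat.dist i.1 j.1 = 1) :
      BrauerRel n (fθ i * fθ j * fθ i) (fθ i)
  | theta_sigma (i) : BrauerRel n (fθ i * fσ i) (fθ i)
  | sigma_theta (i) : BrauerRel n (fσ i * fθ i) (fθ i)
  | theta_sigma_comm (i j) (h : 1 < Nat.dist i.1 j.1) :
      BrauerRel n (fθ i * fσ j) (fσ j * fθ i)
  | sigma_theta_theta (i j) (h : Nat.dist i.1 j.1 = 1) :
      BrauerRel n (fσ i * fθ j * fθ i) (fσ j * fθ i)
  | theta_theta_sigma (i j) (h : Nat.dist i.1 j.1 = 1) :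
      BrauerRel n (fθ i * fθ j * fσ i) (fθ i * fσ j)

/-- The monoid `T` given by the presentation above. -/
abbrev BrauerMonoid (n : ℕ) := PresentedMonoid (BrauerRel n)

/-- The generator `σ_{i+1}` of `T`. -/
def σB {n : ℕ} (i : Fin (n - 1)) : BrauerMonoid n := PresentedMonoid.of (BrauerRel n) (Sum.inl i)

/-- The generator `θ_{i+1}` of `T`. -/
def θB {n : ℕ} (i : Fin (n - 1)) : BrauerMonoid n := PresentedMonoid.of (BrauerRel n) (Sum.inr i)

/-- The point `i` of `{1, …, n}` (0-based: `i.val`). -/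
def lo {n : ℕ} (i : Fin (n - 1)) : Fin n := ⟨i.1, by have := i.2; omega⟩

/-- The point `i + 1` of `{1, …, n}` (0-based: `i.val + 1`). -/
def hi {n : ℕ} (i : Fin (n - 1)) : Fin n := ⟨i.1 + 1, by have := i.2; omega⟩

/-- The adjacent transposition `s_{i+1} = (i+1, i+2)` of the symmetric group on `{1, …, n}`. -/
def sPerm {n : ℕ} (i : Fin (n - 1)) : Equiv.Perm (Fin n) := Equiv.swap (lo i) (hi i)

/-- Lemma `newrellem` of Kudryavtseva–Mazorchuk: in `T`,
(i) `σ_i θ_j σ_i = σ_j θ_i σ_j` and `θ_i σ_j θ_i = θ_i` whenever `|i - j| = 1`, and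
(ii) `σ_i σ_{i+1} θ_i θ_{i+2} = σ_{i+2} σ_{i+1} θ_i θ_{i+2}` for all admissible `i`. -/
theorem brauer_derived_relations (n : ℕ) :
    (∀ i j : Fin (n - 1), Nat.dist i.1 j.1 = 1 →
      σB i * θB j * σB i = σB j * θB i * σB j ∧ θB i * σB j * θB i = θB i) ∧
    (∀ i i₁ i₂ : Fin (n - 1), i₁.1 = i.1 + 1 → i₂.1 = i.1 + 2 →
      σB i * σB i₁ * θB i * θB i₂ = σB i₂ * σB i₁ * θB i * θB i₂) := by
  have rel : ∀ {x y : FreeMonoid (BrauerGen n)}, BrauerRel n x y →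
      PresentedMonoid.mk (BrauerRel n) x = PresentedMonoid.mk (BrauerRel n) y :=
    fun h => PresentedMonoid.mk_eq_mk_of_rel h
  have ss : ∀ i : Fin (n - 1), σB i * σB i = 1 := fun i => rel (.sigma_sq i)
  have st : ∀ i : Fin (n - 1), θB i * σB i = θB i := fun i => rel (.theta_sigma i)
  have ttt : ∀ i j : Fin (n - 1), Nat.dist i.1 j.1 = 1 → θB i * θB j * θB i = θB i :=
    fun i j h => rel (.theta_theta_theta i j h)
  have tc : ∀ i j : Fin (n - 1), 1 < Nat.dist i.1 j.1 → θB i * θB j = θB j * θB i :=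
    fun i j h => rel (.theta_comm i j h)
  have stt : ∀ i j : Fin (n - 1), Nat.dist i.1 j.1 = 1 → σB i * θB j * θB i = σB j * θB i :=
    fun i j h => rel (.sigma_theta_theta i j h)
  have tts : ∀ i j : Fin (n - 1), Nat.dist i.1 j.1 = 1 → θB i * θB j * σB i = θB i * σB j :=
    fun i j h => rel (.theta_theta_sigma i j h)
  have key : ∀ i j : Fin (n - 1), Nat.dist i.1 j.1 = 1 →
      σB i * σB j * θB i = θB j * θB i := by
    intro i j h
    rw [mul_assoc, ← stt i j h, mul_assoc (σB i) (θB j), ← mul_assoc (σB i) (σB i), ss, one_mul]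
  refine ⟨fun i j h => ⟨?_, ?_⟩, fun i j k hj hk => ?_⟩
  · have h' : Nat.dist j.1 i.1 = 1 := by rw [Nat.dist_comm]; exact h
    rw [← stt j i h', mul_assoc (σB j) (θB i), mul_assoc (σB j) (θB i * θB j), tts i j h,
      ← mul_assoc]
  · rw [mul_assoc, ← stt i j h, mul_assoc (σB i), ← mul_assoc (θB i) (σB i), st,
      ← mul_assoc, ttt i j h]
  · have h1 : Nat.dist i.1 j.1 = 1 := by unfold Nat.dist; omega
    have h2 : Nat.dist k.1 j.1 = 1 := by unfold Nat.dist; omega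
    have h3 : 1 < Nat.dist i.1 k.1 := by unfold Nat.dist; omega
    rw [key i j h1, mul_assoc (σB k * σB j), tc i k h3, ← mul_assoc, key k j h2,
      mul_assoc, mul_assoc, tc i k h3]
end

section
/- There exists a monoid homomorphism ψ from the symmetric group Perm(Fin n) to T sending each adjacent transposition s_i = (i, i+1) to σ_i for i = 1,…,n−1; this homomorphism is injective, and its image is exactly the group of units of T. In particular, the group of units of T is isomorphic to the symmetric group S_n. -/
/-- Descending product `s (k+l-1) * ... * s k`. -/
def descE {M : Type*} [Monoid M] (s : ℕ → M) (k : ℕ) : ℕ → M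
  | 0 => 1
  | l + 1 => s (k + l) * descE s k l

theorem descE_succ' {M : Type*} [Monoid M] (s : ℕ → M) (k l : ℕ) :
    descE s k (l + 1) = descE s (k + 1) l * s k := by
  induction l with
  | zero => simp [descE]
  | succ l ih =>
    rw [descE, ih, descE, ← mul_assoc]
    congr 3
    omega

theorem descE_comm {M : Type*} [Monoid M] (s : ℕ → M) (N : ℕ)
    (hc : ∀ i j, i < N → j < N → i + 1 < j → s i * s j = s j * s i) (k l i : ℕ)
    (hi : i < N) (hkl : k + l ≤ N) (h : i + 1 < k ∨ k + l < i) :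
    descE s k l * s i = s i * descE s k l := by
  induction l with
  | zero => simp [descE]
  | succ l ih =>
    have h1 : s (k + l) * s i = s i * s (k + l) := by
      rcases h with h | h
      · exact (hc _ _ hi (by omega) (by omega)).symm
      · exact hc _ _ (by omega) hi (by omega)
    rw [descE, mul_assoc, ih (by omega) (by omega), ← mul_assoc, h1, mul_assoc]

theorem descE_shift {M : Type*} [Monoid M] (s : ℕ → M) (N : ℕ)
    (hc : ∀ i j, i < N → j < N → i + 1 < j → s i * s j = s j * s i)
    (hb : ∀ i, i + 1 < N → s (i + 1) * s i * s (i + 1) = s i * s (i + 1) * s i) (k l i : ℕ)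
    (hkl : k + l ≤ N) (h : k < i + 1) (h' : i + 1 < k + l) :
    descE s k l * s (i + 1) = s i * descE s k l := by
  induction l with
  | zero => omega
  | succ l ih =>
    by_cases hil : i + 1 < k + l
    · rw [descE, mul_assoc, ih (by omega) (by omega), ← mul_assoc,
        ← hc i (k + l) (by omega) (by omega) (by omega), mul_assoc]
    · obtain ⟨l', rfl⟩ : ∃ l', l = l' + 1 := ⟨l - 1, by omega⟩
      have e1 : k + (l' + 1) = i + 1 := by omega
      have e2 : k + l' = i := by omega
      rw [descE, descE, e1, e2, mul_assoc, mul_assoc,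
        descE_comm s N hc k l' (i + 1) (by omega) (by omega) (by omega)]
      have := hb i (by omega)
      simp only [← mul_assoc]
      rw [this]

theorem coxeter_card {M : Type*} [Monoid M] (s : ℕ → M) (N : ℕ)
    (hs : ∀ i, i < N → s i * s i = 1)
    (hc : ∀ i j, i < N → j < N → i + 1 < j → s i * s j = s j * s i)
    (hb : ∀ i, i + 1 < N → s (i + 1) * s i * s (i + 1) = s i * s (i + 1) * s i)
    (m : ℕ) (hm : m ≤ N) :
    ∃ F : Finset M, 1 ∈ F ∧ F.card ≤ (m + 1).factorial ∧ ∀ a ∈ F, ∀ i < m, a * s i ∈ F := by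
  classical
  induction m with
  | zero => exact ⟨{1}, by simp⟩
  | succ m ih =>
    obtain ⟨F, h1, hcard, hF⟩ := ih (by omega)
    have key : ∀ x, x ∈ Finset.image₂ (fun a l => a * descE s (m + 1 - l) l) F
        (Finset.range (m + 2)) ↔ ∃ a ∈ F, ∃ k l, k + l = m + 1 ∧ a * descE s k l = x := by
      intro x
      simp only [Finset.mem_image₂, Finset.mem_range]
      constructor
      · rintro ⟨a, ha, l, hl, rfl⟩
        exact ⟨a, ha, _, l, by omega, rfl⟩
      · rintro ⟨a, ha, k, l, hl, rfl⟩
        refine ⟨a, ha, l, by omega, ?_⟩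
        rw [show m + 1 - l = k by omega]
    refine ⟨Finset.image₂ (fun a l => a * descE s (m + 1 - l) l) F (Finset.range (m + 2)),
      ?_, ?_, ?_⟩
    · rw [key]
      exact ⟨1, h1, m + 1, 0, by omega, by simp [descE]⟩
    · refine (Finset.card_image₂_le _ _ _).trans ?_
      rw [Finset.card_range, Nat.factorial_succ (m + 1), mul_comm]
      exact Nat.mul_le_mul_left _ hcard
    · intro x hx i hi
      rw [key] at hx ⊢
      obtain ⟨a, ha, k, l, hkl, rfl⟩ := hx
      rcases lt_trichotomy i k with h | h | h
      · by_cases h2 : i + 1 = k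
        · refine ⟨a, ha, i, l + 1, by omega, ?_⟩
          rw [descE_succ', h2, mul_assoc]
        · refine ⟨a * s i, hF a ha i (by omega), k, l, hkl, ?_⟩
          rw [mul_assoc, mul_assoc, descE_comm s N hc k l i (by omega) (by omega) (by omega)]
      · subst h
        obtain ⟨l', rfl⟩ : ∃ l', l = l' + 1 := ⟨l - 1, by omega⟩
        refine ⟨a, ha, i + 1, l', by omega, ?_⟩
        rw [descE_succ', mul_assoc, mul_assoc, hs i (by omega), mul_one]
      · obtain ⟨j, rfl⟩ : ∃ j, i = j + 1 := ⟨i - 1, by omega⟩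
        refine ⟨a * s j, hF a ha j (by omega), k, l, hkl, ?_⟩
        rw [mul_assoc, mul_assoc, descE_shift s N hc hb k l j (by omega) (by omega) (by omega)]

/-- Images of the generators in `S_n` with a zero adjoined; `θ` goes to zero. -/
noncomputable def brauerGenMap (n : ℕ) : BrauerGen n → WithZero (Equiv.Perm (Fin n))
  | Sum.inl i => (sPerm i : WithZero (Equiv.Perm (Fin n)))
  | Sum.inr _ => 0

theorem sPerm_sq {n : ℕ} (i : Fin (n - 1)) : sPerm i * sPerm i = 1 := by
  simp [sPerm]

theorem sPerm_comm {n : ℕ} (i j : Fin (n - 1)) (h : 1 < Nat.dist i.1 j.1) :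
    sPerm i * sPerm j = sPerm j * sPerm i := by
  unfold Nat.dist at h
  refine (Equiv.Perm.disjoint_swap_swap ?_).commute.eq
  simp only [List.nodup_cons, List.mem_cons, lo, hi, Fin.ext_iff, List.not_mem_nil,
    List.nodup_nil, or_false, not_false_eq_true, and_true]
  omega

theorem sPerm_braid_aux {n : ℕ} (i j : Fin (n - 1)) (h : j.1 = i.1 + 1) :
    sPerm i * sPerm j * sPerm i = sPerm j * sPerm i * sPerm j := by
  have hl : lo j = hi i := by simp only [lo, hi, Fin.ext_iff]; omega
  have h1 : lo i ≠ hi i := by simp only [lo, hi, ne_eq, Fin.ext_iff]; omega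
  have h2 : lo i ≠ hi j := by simp only [lo, hi, ne_eq, Fin.ext_iff]; omega
  have h3 : hi j ≠ hi i := by simp only [hi, ne_eq, Fin.ext_iff]; omega
  unfold sPerm
  rw [hl, Equiv.swap_mul_swap_mul_swap h1 h2, Equiv.swap_comm (lo i) (hi i),
    Equiv.swap_comm (hi i) (hi j), Equiv.swap_mul_swap_mul_swap h3 h2.symm,
    Equiv.swap_comm]

theorem sPerm_braid {n : ℕ} (i j : Fin (n - 1)) (h : Nat.dist i.1 j.1 = 1) :
    sPerm i * sPerm j * sPerm i = sPerm j * sPerm i * sPerm j := by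
  unfold Nat.dist at h
  rcases Nat.lt_or_ge i.1 j.1 with h' | h'
  · exact sPerm_braid_aux i j (by omega)
  · exact (sPerm_braid_aux j i (by omega)).symm

theorem brauerGenMap_rel (n : ℕ) (a b : FreeMonoid (BrauerGen n)) (h : BrauerRel n a b) :
    FreeMonoid.lift (brauerGenMap n) a = FreeMonoid.lift (brauerGenMap n) b := by
  cases h <;> simp only [fσ, fθ, map_mul, map_one, FreeMonoid.lift_eval_of, brauerGenMap,
    mul_zero, zero_mul]
  case sigma_sq i => rw [← WithZero.coe_mul, sPerm_sq, WithZero.coe_one]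
  case sigma_comm i j h => rw [← WithZero.coe_mul, sPerm_comm i j h, WithZero.coe_mul]
  case braid i j h =>
    rw [← WithZero.coe_mul, ← WithZero.coe_mul, sPerm_braid i j h, WithZero.coe_mul,
      WithZero.coe_mul]

/-- The homomorphism from `T` to `S_n` with zero adjoined. -/
noncomputable def brauerPhi (n : ℕ) : BrauerMonoid n →* WithZero (Equiv.Perm (Fin n)) :=
  PresentedMonoid.lift (brauerGenMap n) (brauerGenMap_rel n)

theorem brauerPhi_σ {n : ℕ} (i : Fin (n - 1)) :
    brauerPhi n (σB i) = (sPerm i : WithZero (Equiv.Perm (Fin n))) := rfl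

theorem brauerPhi_θ {n : ℕ} (i : Fin (n - 1)) : brauerPhi n (θB i) = 0 := rfl

theorem mem_of_phi_ne_zero {n : ℕ} (x : BrauerMonoid n) (hx : brauerPhi n x ≠ 0) :
    x ∈ Submonoid.closure (Set.range (σB (n := n))) := by
  have hall : x ∈ Submonoid.closure (Set.range (PresentedMonoid.of (BrauerRel n))) := by
    rw [PresentedMonoid.closure_range_of]; trivial
  induction hall using Submonoid.closure_induction with
  | mem x h =>
    obtain ⟨i | i, rfl⟩ := h
    · exact Submonoid.subset_closure ⟨i, rfl⟩
    · exact absurd (brauerPhi_θ i) hx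
  | one => exact one_mem _
  | mul x y _ _ ihx ihy =>
    rw [map_mul] at hx
    exact mul_mem (ihx (left_ne_zero_of_mul hx)) (ihy (right_ne_zero_of_mul hx))

theorem σB_sq {n : ℕ} (i : Fin (n - 1)) : σB i * σB i = 1 :=
  PresentedMonoid.mk_eq_mk_of_rel (BrauerRel.sigma_sq i)

theorem σB_comm {n : ℕ} (i j : Fin (n - 1)) (h : 1 < Nat.dist i.1 j.1) :
    σB i * σB j = σB j * σB i :=
  PresentedMonoid.mk_eq_mk_of_rel (BrauerRel.sigma_comm i j h)

theorem σB_braid {n : ℕ} (i j : Fin (n - 1)) (h : Nat.dist i.1 j.1 = 1) :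
    σB i * σB j * σB i = σB j * σB i * σB j :=
  PresentedMonoid.mk_eq_mk_of_rel (BrauerRel.braid i j h)

theorem closure_finset (n : ℕ) (hn : 1 ≤ n) :
    ∃ F : Finset (BrauerMonoid n), F.card ≤ n.factorial ∧
      ∀ x ∈ Submonoid.closure (Set.range (σB (n := n))), x ∈ F := by
  obtain ⟨F, h1, hcard, hF⟩ := coxeter_card
    (fun i => if h : i < n - 1 then σB (n := n) ⟨i, h⟩ else 1) (n - 1)
    (fun i hi => by simp only [dif_pos hi]; exact σB_sq _)
    (fun i j hi hj hij => by
      simp only [dif_pos hi, dif_pos hj]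
      exact σB_comm _ _ (by simp only [Nat.dist]; omega))
    (fun i hi => by
      have hi' : i < n - 1 := by omega
      simp only [dif_pos hi, dif_pos hi']
      exact σB_braid _ _ (by simp only [Nat.dist]; omega)) (n - 1) le_rfl
  rw [Nat.sub_add_cancel hn] at hcard
  refine ⟨F, hcard, fun x hx => ?_⟩
  induction hx using Submonoid.closure_induction_right with
  | one => exact h1
  | mul_right x _ y hy ih =>
    obtain ⟨i, rfl⟩ := hy
    have := hF x ih i.1 i.2
    simpa only [dif_pos i.2] using this

theorem exists_closure (n : ℕ) (hn : 1 ≤ n) (p : Equiv.Perm (Fin n)) :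
    ∃ x ∈ Submonoid.closure (Set.range (σB (n := n))), brauerPhi n x = p := by
  obtain ⟨N, rfl⟩ : ∃ N, n = N + 1 := ⟨n - 1, by omega⟩
  have hp : p ∈ Submonoid.closure
      (Set.range fun i : Fin N => Equiv.swap i.castSucc i.succ) := by
    rw [Equiv.Perm.mclosure_swap_castSucc_succ]; trivial
  induction hp using Submonoid.closure_induction with
  | mem x h =>
    obtain ⟨i, rfl⟩ := h
    exact ⟨σB (n := N + 1) i, Submonoid.subset_closure ⟨i, rfl⟩, rfl⟩
  | one => exact ⟨1, one_mem _, map_one _⟩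
  | mul x y _ _ ihx ihy =>
    obtain ⟨a, ha, hx⟩ := ihx
    obtain ⟨b, hb, hy⟩ := ihy
    exact ⟨a * b, mul_mem ha hb, by rw [map_mul, hx, hy, WithZero.coe_mul]⟩

theorem phi_injOn (n : ℕ) (hn : 1 ≤ n) (x y : BrauerMonoid n)
    (hx : x ∈ Submonoid.closure (Set.range (σB (n := n))))
    (hy : y ∈ Submonoid.closure (Set.range (σB (n := n))))
    (h : brauerPhi n x = brauerPhi n y) : x = y := by
  classical
  obtain ⟨F, hcard, hF⟩ := closure_finset n hn
  have hsub : (Submonoid.closure (Set.range (σB (n := n))) : Set (BrauerMonoid n)) ⊆ F := hF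
  have hfin : (Submonoid.closure (Set.range (σB (n := n))) : Set (BrauerMonoid n)).Finite :=
    F.finite_toSet.subset hsub
  have h1 := Set.ncard_le_ncard hsub F.finite_toSet
  rw [Set.ncard_coe_finset] at h1
  have h2 := Set.ncard_image_le (f := brauerPhi n) hfin
  have h3 : Set.range (fun p : Equiv.Perm (Fin n) => (p : WithZero (Equiv.Perm (Fin n)))) ⊆
      brauerPhi n '' (Submonoid.closure (Set.range (σB (n := n))) : Set (BrauerMonoid n)) := by
    rintro _ ⟨p, rfl⟩
    obtain ⟨x, hx, h⟩ := exists_closure n hn p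
    exact ⟨x, hx, h⟩
  have h4 := Set.ncard_le_ncard h3 (hfin.image _)
  have h5 : (Set.range (fun p : Equiv.Perm (Fin n) =>
      (p : WithZero (Equiv.Perm (Fin n))))).ncard = n.factorial := by
    rw [← Set.image_univ, Set.ncard_image_of_injective _ WithZero.coe_injective,
      Set.ncard_univ, Nat.card_eq_fintype_card, Fintype.card_perm, Fintype.card_fin]
  exact Set.injOn_of_ncard_image_eq (by omega) hfin hx hy h

/-- Lemma `lemma301` of Kudryavtseva–Mazorchuk: there is a monoid homomorphism
`ψ : S_n → T` with `ψ(s_i) = σ_i`; it is injective and its image is exactly the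
group of units of `T`.  In particular the group of units of `T` is isomorphic to `S_n`. -/
theorem brauer_units (n : ℕ) (hn : 1 ≤ n) :
    ∃ ψ : Equiv.Perm (Fin n) →* BrauerMonoid n,
      (∀ i : Fin (n - 1), ψ (sPerm i) = σB i) ∧
      Function.Injective ψ ∧
      Set.range ψ = {x : BrauerMonoid n | IsUnit x} := by
  choose f hf hφ using exists_closure n hn
  refine ⟨{ toFun := f, map_one' := ?_, map_mul' := ?_ }, ?_, ?_, ?_⟩
  · exact phi_injOn n hn _ _ (hf _) (one_mem _) (by rw [hφ, map_one, WithZero.coe_one])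
  · intro p q
    exact phi_injOn n hn _ _ (hf _) (mul_mem (hf _) (hf _))
      (by rw [map_mul, hφ, hφ, hφ, WithZero.coe_mul])
  · intro i
    exact phi_injOn n hn _ _ (hf _) (Submonoid.subset_closure ⟨i, rfl⟩)
      ((hφ _).trans (brauerPhi_σ i).symm)
  · intro p q h
    have h' : f p = f q := h
    have := hφ p
    rw [h', hφ q] at this
    exact (WithZero.coe_injective this).symm
  · ext x
    simp only [Set.mem_range, Set.mem_ofPred_eq, MonoidHom.coe_mk, OneHom.coe_mk]
    constructor
    · rintro ⟨p, rfl⟩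
      have hp := hf p
      generalize f p = y at hp
      induction hp using Submonoid.closure_induction with
      | mem x h =>
        obtain ⟨i, rfl⟩ := h
        exact ⟨⟨σB i, σB i, σB_sq i, σB_sq i⟩, rfl⟩
      | one => exact isUnit_one
      | mul x y _ _ ihx ihy => exact ihx.mul ihy
    · intro hx
      have hne : brauerPhi n x ≠ 0 := (hx.map (brauerPhi n)).ne_zero
      obtain ⟨p, hp⟩ := WithZero.ne_zero_iff_exists.1 hne
      exact ⟨p, phi_injOn n hn _ _ (hf _) (mem_of_phi_ne_zero x hne) (by rw [hφ, hp])⟩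
end

section
/- Let ψ : Perm(Fin n) → T be the monoid homomorphism with ψ(s_i) = σ_i for all adjacent transpositions s_i. Then for every permutation w and every i ∈ {1,…,n−1}, one has ψ(w⁻¹)·θ_1·ψ(w) = θ_i if and only if w maps the set {1,2} onto the set {i, i+1}. -/
section Rels
variable {n : ℕ}

theorem bm_sound {a b : FreeMonoid (BrauerGen n)} (h : BrauerRel n a b) :
    PresentedMonoid.mk (BrauerRel n) a = PresentedMonoid.mk (BrauerRel n) b :=
  (Con.eq _).2 (ConGen.Rel.of _ _ h)

theorem bm_ss (i : Fin (n-1)) : σB i * σB i = (1 : BrauerMonoid n) := bm_sound (.sigma_sq i)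
theorem bm_tt (i : Fin (n-1)) : θB i * θB i = (θB i : BrauerMonoid n) := bm_sound (.theta_idem i)
theorem bm_ttt (i j : Fin (n-1)) (h : Nat.dist i.1 j.1 = 1) :
    θB i * θB j * θB i = (θB i : BrauerMonoid n) := bm_sound (.theta_theta_theta i j h)
theorem bm_ts (i : Fin (n-1)) : θB i * σB i = (θB i : BrauerMonoid n) := bm_sound (.theta_sigma i)
theorem bm_st (i : Fin (n-1)) : σB i * θB i = (θB i : BrauerMonoid n) := bm_sound (.sigma_theta i)
theorem bm_tsc (i j : Fin (n-1)) (h : 1 < Nat.dist i.1 j.1) :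
    θB i * σB j = (σB j * θB i : BrauerMonoid n) := bm_sound (.theta_sigma_comm i j h)
theorem bm_stt (i j : Fin (n-1)) (h : Nat.dist i.1 j.1 = 1) :
    σB i * θB j * θB i = (σB j * θB i : BrauerMonoid n) := bm_sound (.sigma_theta_theta i j h)
theorem bm_tts (i j : Fin (n-1)) (h : Nat.dist i.1 j.1 = 1) :
    θB i * θB j * σB i = (θB i * σB j : BrauerMonoid n) := bm_sound (.theta_theta_sigma i j h)

theorem bm_conj (i j : Fin (n-1)) (h : Nat.dist i.1 j.1 = 1) :
    σB i * σB j * θB i * (σB j * σB i) = (θB j : BrauerMonoid n) := by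
  have h1 : σB i * σB j * θB i = (θB j * θB i : BrauerMonoid n) := by
    rw [mul_assoc, ← bm_stt i j h, ← mul_assoc, ← mul_assoc, bm_ss, one_mul]
  have h2 : θB i * (σB j * σB i) = (θB i * θB j : BrauerMonoid n) := by
    rw [← mul_assoc, ← bm_tts i j h, mul_assoc, bm_ss, mul_one]
  calc σB i * σB j * θB i * (σB j * σB i)
      = σB i * σB j * (θB i * θB i) * (σB j * σB i) := by rw [bm_tt]
    _ = (σB i * σB j * θB i) * (θB i * (σB j * σB i)) := by simp only [mul_assoc]
    _ = θB j * (θB i * θB i) * θB j := by rw [h1, h2]; simp only [mul_assoc]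
    _ = θB j := by rw [bm_tt, bm_ttt]; rw [Nat.dist_comm]; exact h

end Rels

/-- Boolean action of generators. -/
def bmAct {n : ℕ} : BrauerGen n → Function.End (Set (Fin n))
  | Sum.inl i => fun A => sPerm i '' A
  | Sum.inr i => fun A => {x | (x = lo i ∨ x = hi i) ∧ (lo i ∈ A ∨ hi i ∈ A)}

theorem sPerm_image {n : ℕ} (i : Fin (n-1)) (A : Set (Fin n)) (x : Fin n) :
    x ∈ sPerm i '' A ↔ sPerm i x ∈ A := by
  rw [Equiv.image_eq_preimage_symm]
  simp [sPerm]

theorem sPerm_apply {n : ℕ} (i : Fin (n-1)) (x : Fin n) :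
    sPerm i x = if x = lo i then hi i else if x = hi i then lo i else x := by
  simp [sPerm, Equiv.swap_apply_def]

theorem end_mul_apply {α : Type*} (f g : Function.End α) (a : α) : (f * g) a = f (g a) := rfl

theorem end_one_apply {α : Type*} (a : α) : (1 : Function.End α) a = a := rfl

theorem bmAct_inl {n : ℕ} (i : Fin (n-1)) (A : Set (Fin n)) (x : Fin n) :
    x ∈ (bmAct (Sum.inl i) A : Set (Fin n)) ↔ sPerm i x ∈ A := sPerm_image i A x

theorem bmAct_inr {n : ℕ} (i : Fin (n-1)) (A : Set (Fin n)) (x : Fin n) :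
    x ∈ (bmAct (Sum.inr i) A : Set (Fin n)) ↔ (x = lo i ∨ x = hi i) ∧ (lo i ∈ A ∨ hi i ∈ A) :=
  Iff.rfl

theorem bm_far {n : ℕ} {i j : Fin (n-1)} (h : 1 < Nat.dist i.1 j.1) :
    lo i ≠ lo j ∧ lo i ≠ hi j ∧ hi i ≠ lo j ∧ hi i ≠ hi j := by
  simp only [lo, hi, Nat.dist, ne_eq, Fin.ext_iff] at *
  omega

theorem bm_near {n : ℕ} {i j : Fin (n-1)} (h : Nat.dist i.1 j.1 = 1) :
    (lo i = hi j ∧ lo i ≠ lo j ∧ hi i ≠ hi j ∧ hi i ≠ lo j) ∨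
    (lo j = hi i ∧ lo i ≠ lo j ∧ hi i ≠ hi j ∧ hi j ≠ lo i) := by
  simp only [lo, hi, Nat.dist, ne_eq, Fin.ext_iff] at *
  omega

theorem bm_lohi {n : ℕ} (i : Fin (n-1)) : lo i ≠ hi i := by
  simp [lo, hi, Fin.ext_iff]

theorem bmAct_rel {n : ℕ} (a b : FreeMonoid (BrauerGen n)) (h : BrauerRel n a b) :
    FreeMonoid.lift bmAct a = FreeMonoid.lift bmAct b := by
  cases h <;> funext A <;> apply Set.ext <;> intro x <;>
    simp only [fσ, fθ, map_mul, map_one, FreeMonoid.lift_eval_of, end_mul_apply,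
      end_one_apply, bmAct_inl, bmAct_inr, sPerm_apply]
  case sigma_sq i => grind [bm_lohi i]
  case sigma_comm i j h => grind [bm_far h, bm_lohi i, bm_lohi j]
  case braid i j h => grind [bm_near h, bm_lohi i, bm_lohi j]
  case theta_idem i => grind [bm_lohi i]
  case theta_comm i j h => grind [bm_far h, bm_lohi i, bm_lohi j]
  case theta_theta_theta i j h => grind [bm_near h, bm_lohi i, bm_lohi j]
  case theta_sigma i => grind [bm_lohi i]
  case sigma_theta i => grind [bm_lohi i]
  case theta_sigma_comm i j h => grind [bm_far h, bm_lohi i, bm_lohi j]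
  case sigma_theta_theta i j h => grind [bm_near h, bm_lohi i, bm_lohi j]
  case theta_theta_sigma i j h => grind [bm_near h, bm_lohi i, bm_lohi j]

def bmHom (n : ℕ) : BrauerMonoid n →* Function.End (Set (Fin n)) :=
  PresentedMonoid.lift bmAct bmAct_rel

theorem bmHom_psi (n : ℕ) (hn : 1 < n)
    (ψ : Equiv.Perm (Fin n) →* BrauerMonoid n)
    (hψ : ∀ i : Fin (n - 1), ψ (sPerm i) = σB i) (w : Equiv.Perm (Fin n)) (A : Set (Fin n)) :
    bmHom n (ψ w) A = w '' A := by
  obtain ⟨m, rfl⟩ : ∃ m, n = m + 1 := ⟨n - 1, by omega⟩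
  have hw : w ∈ Submonoid.closure (Set.range fun i : Fin m => Equiv.swap i.castSucc i.succ) := by
    rw [Equiv.Perm.mclosure_swap_castSucc_succ]; trivial
  induction hw using Submonoid.closure_induction generalizing A with
  | mem x hx =>
    obtain ⟨i, rfl⟩ := hx
    have : Equiv.swap i.castSucc i.succ = sPerm (n := m+1) i := rfl
    simp only [this]
    rw [hψ]
    rfl
  | one => rw [map_one, map_one]; simp [Function.End.one_def]
  | mul x y _ _ hx hy =>
    rw [map_mul, map_mul, end_mul_apply, hy, hx]
    rw [Equiv.Perm.coe_mul, Set.image_comp]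

section Conv
variable {n : ℕ} (ψ : Equiv.Perm (Fin n) →* BrauerMonoid n)
    (hψ : ∀ i : Fin (n - 1), ψ (sPerm i) = σB i)

theorem comm_swap (hn : 1 < n) (hψ : ∀ i : Fin (n - 1), ψ (sPerm i) = σB i) (k : ℕ) :
    ∀ a b : Fin n, 2 ≤ a.1 → b.1 = a.1 + 1 + k →
    Commute (ψ (Equiv.swap a b)) (θB ⟨0, by omega⟩) := by
  induction k with
  | zero =>
    intro a b ha hb
    have : Equiv.swap a b = sPerm (n := n) ⟨a.1, by omega⟩ := by
      unfold sPerm; congr 1; apply Fin.ext; simpa [hi] using hb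
    rw [this, hψ]
    exact (bm_tsc _ _ (by simp [Nat.dist]; omega)).symm
  | succ k ih =>
    intro a b ha hb
    have h1 := ih a ⟨a.1+1+k, by omega⟩ ha rfl
    have hc : Commute (ψ (Equiv.swap ⟨a.1+1+k, by omega⟩ b)) (θB ⟨0, by omega⟩) := by
      have : Equiv.swap ⟨a.1+1+k, by omega⟩ b = sPerm (n := n) ⟨a.1+1+k, by omega⟩ := by
        unfold sPerm; congr 1; apply Fin.ext; simp [hi]; omega
      rw [this, hψ]
      exact (bm_tsc _ _ (by simp [Nat.dist]; omega)).symm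
    have : Equiv.swap a b = Equiv.swap ⟨a.1+1+k, by omega⟩ b * Equiv.swap a ⟨a.1+1+k, by omega⟩
        * Equiv.swap ⟨a.1+1+k, by omega⟩ b := by
      rw [Equiv.swap_mul_swap_mul_swap, Equiv.swap_comm]
      all_goals (intro h; have := congrArg Fin.val h; try dsimp only at this
                 omega)
    rw [this, map_mul, map_mul]
    exact (hc.mul_left h1).mul_left hc

theorem comm_fix (hn : 1 < n) (hψ : ∀ i : Fin (n - 1), ψ (sPerm i) = σB i)
    (u : Equiv.Perm (Fin n)) (h0 : u ⟨0, by omega⟩ = ⟨0, by omega⟩)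
    (h1 : u ⟨1, by omega⟩ = ⟨1, by omega⟩) :
    Commute (ψ u) (θB ⟨0, by omega⟩) := by
  have key : ∀ v : Equiv.Perm {x : Fin n // 2 ≤ x.1},
      Commute (ψ (Equiv.Perm.ofSubtype v)) (θB ⟨0, by omega⟩) := by
    intro v
    induction v using Equiv.Perm.swap_induction_on with
    | one => simp
    | swap_mul f x y hxy ih =>
      rw [map_mul, map_mul]
      refine Commute.mul_left ?_ ih
      rw [Equiv.Perm.ofSubtype_swap_eq]
      have hne : x.1.1 ≠ y.1.1 := fun h => hxy (Subtype.ext (Fin.ext h))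
      rcases lt_or_gt_of_ne hne with h | h
      · exact comm_swap ψ hn hψ (y.1.1 - (x.1.1+1)) _ _ x.2 (by omega)
      · rw [Equiv.swap_comm]
        exact comm_swap ψ hn hψ (x.1.1 - (y.1.1+1)) _ _ y.2 (by omega)
  have hp : ∀ x : Fin n, x.1 < 2 → u x = x := by
    intro x hx
    have : x = ⟨0, by omega⟩ ∨ x = ⟨1, by omega⟩ := by simp only [Fin.ext_iff]; omega
    rcases this with h | h
    · rw [h]; exact h0
    · rw [h]; exact h1
  have hq : ∀ x : Fin n, 2 ≤ (u x).1 ↔ 2 ≤ x.1 := by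
    intro x
    constructor
    · intro h; by_contra hx
      rw [hp x (by omega)] at h; omega
    · intro h; by_contra hx
      have := u.injective (hp (u x) (by omega))
      rw [this] at hx; omega
  have := key (u.subtypePerm hq)
  rwa [Equiv.Perm.ofSubtype_subtypePerm] at this
  intro x hx
  by_contra h
  exact hx (hp x (by omega))

theorem exists_conj (hn : 1 < n) (hψ : ∀ i : Fin (n - 1), ψ (sPerm i) = σB i) (k : ℕ) :
    ∀ hk : k < n - 1, ∃ c : Equiv.Perm (Fin n), c ⟨0, by omega⟩ = lo ⟨k, hk⟩ ∧
      c ⟨1, by omega⟩ = hi ⟨k, hk⟩ ∧ ψ c * θB ⟨0, by omega⟩ * ψ c⁻¹ = θB ⟨k, hk⟩ := by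
  induction k with
  | zero => intro hk; exact ⟨1, rfl, rfl, by simp⟩
  | succ k ih =>
    intro hk
    obtain ⟨c, h0, h1, h2⟩ := ih (by omega)
    have si : ∀ i : Fin (n-1), (sPerm i)⁻¹ = sPerm i := fun i => by simp [sPerm]
    refine ⟨sPerm ⟨k, by omega⟩ * sPerm ⟨k+1, hk⟩ * c, ?_, ?_, ?_⟩
    · simp only [Equiv.Perm.mul_apply, h0, sPerm_apply, lo, hi, Fin.ext_iff]
      grind
    · simp only [Equiv.Perm.mul_apply, h1, sPerm_apply, lo, hi, Fin.ext_iff]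
      grind
    · rw [← bm_conj ⟨k, by omega⟩ ⟨k+1, hk⟩ (by simp [Nat.dist]), ← h2]
      simp only [mul_inv_rev, map_mul, si, hψ, mul_assoc]

end Conv

/-- Lemma `lemma202` of Kudryavtseva–Mazorchuk: for every permutation `w` of `{1, …, n}`
and every `i`, one has `ψ(w⁻¹) θ_1 ψ(w) = θ_i` if and only if `w` maps the set `{1, 2}`
onto the set `{i, i+1}`.  (The symmetric group acts on `{1, …, n}` on the *right*; the
right action of `w` on a point `x` is `w⁻¹ x` in terms of Mathlib's left-composition
convention for `Equiv.Perm`, so `w({1,2})` is the image of `{1,2}` under `⇑w⁻¹`.) -/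
theorem brauer_conj_theta (n : ℕ) (hn : 2 ≤ n)
    (ψ : Equiv.Perm (Fin n) →* BrauerMonoid n)
    (hψ : ∀ i : Fin (n - 1), ψ (sPerm i) = σB i)
    (w : Equiv.Perm (Fin n)) (i : Fin (n - 1)) :
    ψ w⁻¹ * θB ⟨0, by omega⟩ * ψ w = θB i ↔
      ⇑w⁻¹ '' ({⟨0, by omega⟩, ⟨1, by omega⟩} : Set (Fin n)) = {lo i, hi i} := by
  have hm : ∀ u : Equiv.Perm (Fin n), ψ u * ψ u⁻¹ = 1 := fun u => by rw [← map_mul]; simp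
  constructor
  · intro h
    have h2 := congrFun (congrArg (bmHom n) h)
      (⇑w⁻¹ '' ({⟨0, by omega⟩, ⟨1, by omega⟩} : Set (Fin n)))
    have ht : ∀ (j : Fin (n-1)) A, bmHom n (θB j) A =
      {x | (x = lo j ∨ x = hi j) ∧ (lo j ∈ A ∨ hi j ∈ A)} := fun j A => rfl
    rw [map_mul, map_mul, end_mul_apply, end_mul_apply, bmHom_psi n hn ψ hψ, bmHom_psi n hn ψ hψ, ht, ht] at h2
    have h3 : (⇑w '' (⇑w⁻¹ '' ({⟨0, by omega⟩, ⟨1, by omega⟩} : Set (Fin n)))) =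
        {⟨0, by omega⟩, ⟨1, by omega⟩} := by
      rw [← Set.image_comp, ← Equiv.Perm.coe_mul]; simp
    rw [h3] at h2
    have h4 : {x : Fin n | (x = lo ⟨0, by omega⟩ ∨ x = hi ⟨0, by omega⟩) ∧
        (lo ⟨0, by omega⟩ ∈ ({⟨0, by omega⟩, ⟨1, by omega⟩} : Set (Fin n)) ∨
         hi ⟨0, by omega⟩ ∈ ({⟨0, by omega⟩, ⟨1, by omega⟩} : Set (Fin n)))} =
        {⟨0, by omega⟩, ⟨1, by omega⟩} := by
      ext x; simp [lo, hi]
    rw [h4] at h2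
    have h5 : w⁻¹ ⟨0, by omega⟩ ∈ ⇑w⁻¹ '' ({⟨0, by omega⟩, ⟨1, by omega⟩} : Set (Fin n)) :=
      ⟨_, by simp, rfl⟩
    have h6 := h5
    rw [h2] at h6
    rw [h2]
    ext x
    constructor
    · rintro ⟨h, -⟩; exact h
    · intro h; exact ⟨h, h6.2⟩
  · intro h
    obtain ⟨c, h0, h1, h2⟩ := exists_conj ψ hn hψ i.1 i.2
    have e0 : w⁻¹ ⟨0, by omega⟩ ∈ ({lo i, hi i} : Set (Fin n)) := by
      rw [← h]; exact ⟨_, by simp, rfl⟩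
    have e1 : w⁻¹ ⟨1, by omega⟩ ∈ ({lo i, hi i} : Set (Fin n)) := by
      rw [← h]; exact ⟨_, by simp, rfl⟩
    have hne : w⁻¹ ⟨0, by omega⟩ ≠ w⁻¹ ⟨1, by omega⟩ := fun h => by
      have := w⁻¹.injective h
      simp at this
    have hcomm : Commute (ψ (c⁻¹ * w⁻¹)) (θB ⟨0, by omega⟩) := by
      rcases e0 with e0 | e0 <;> rcases e1 with e1 | e1
      · exact absurd (e0.trans e1.symm) hne
      · apply comm_fix ψ hn hψ
        · rw [Equiv.Perm.mul_apply, e0, Equiv.Perm.inv_eq_iff_eq, h0]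
        · rw [Equiv.Perm.mul_apply, e1, Equiv.Perm.inv_eq_iff_eq, h1]
      · have hs : Commute (ψ (sPerm ⟨0, by omega⟩)) (θB ⟨0, by omega⟩) := by
          rw [hψ]; exact (bm_st _).trans (bm_ts _).symm
        have hf : Commute (ψ (sPerm ⟨0, by omega⟩ * (c⁻¹ * w⁻¹))) (θB ⟨0, by omega⟩) := by
          have f0 : c⁻¹ (lo i) = ⟨0, by omega⟩ := by rw [Equiv.Perm.inv_eq_iff_eq, h0]
          have f1 : c⁻¹ (hi i) = ⟨1, by omega⟩ := by rw [Equiv.Perm.inv_eq_iff_eq, h1]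
          apply comm_fix ψ hn hψ
          · rw [Equiv.Perm.mul_apply, Equiv.Perm.mul_apply, e0, f1]; simp [sPerm_apply, lo, hi]
          · rw [Equiv.Perm.mul_apply, Equiv.Perm.mul_apply, e1, f0]; simp [sPerm_apply, lo, hi]
        have := hs.mul_left hf
        rwa [← map_mul, ← mul_assoc, show sPerm (n := n) ⟨0, by omega⟩ * sPerm ⟨0, by omega⟩ = 1 by
          simp [sPerm], one_mul] at this
      · exact absurd (e0.trans e1.symm) hne
    have hw : ψ w⁻¹ = ψ c * ψ (c⁻¹ * w⁻¹) := by rw [← map_mul]; simp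
    have hw2 : ψ w = ψ (c⁻¹ * w⁻¹)⁻¹ * ψ c⁻¹ := by rw [← map_mul]; simp
    rw [hw, hw2, mul_assoc (ψ c), hcomm.eq, ← h2]
    simp only [mul_assoc]
    rw [← mul_assoc (ψ (c⁻¹ * w⁻¹)), hm, one_mul]
end

section
/- Let ψ : Perm(Fin n) → T be the monoid homomorphism with ψ(s_i) = σ_i. If w, v ∈ Perm(Fin n) are such that w({1,2}) ∩ v({1,2}) = ∅, then the elements ψ(w⁻¹)θ_1ψ(w) and ψ(v⁻¹)θ_1ψ(v) of T commute. -/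
theorem rel_eq {n : ℕ} {a b : FreeMonoid (BrauerGen n)} (h : BrauerRel n a b) :
    PresentedMonoid.mk (BrauerRel n) a = PresentedMonoid.mk (BrauerRel n) b :=
  (Con.eq _).2 (ConGen.Rel.of _ _ h)

theorem theta_conj {n : ℕ} (i j : Fin (n - 1)) (h : Nat.dist i.1 j.1 = 1) :
    (σB i * σB j) * θB i * (σB j * σB i) = θB j := by
  have h' : Nat.dist j.1 i.1 = 1 := by rw [Nat.dist_comm]; exact h
  have sq : σB i * σB i = 1 := rel_eq (BrauerRel.sigma_sq i)
  have e1 : σB i * θB j * θB i = σB j * θB i := rel_eq (BrauerRel.sigma_theta_theta i j h)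
  have e2 : θB i * θB j * σB i = θB i * σB j := rel_eq (BrauerRel.theta_theta_sigma i j h)
  have e3 : θB j * θB i * θB j = θB j := rel_eq (BrauerRel.theta_theta_theta j i h')
  have f1 : σB i * (σB j * θB i) = θB j * θB i := by
    rw [← e1]; simp only [← mul_assoc]; rw [sq, one_mul]
  have f2 : θB i * (σB j * σB i) = θB i * θB j := by
    rw [← mul_assoc, ← e2, mul_assoc, sq, mul_one]
  calc _ = (σB i * (σB j * θB i)) * (σB j * σB i) := by simp only [mul_assoc]
    _ = θB j * (θB i * (σB j * σB i)) := by rw [f1, mul_assoc]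
    _ = _ := by rw [f2, ← mul_assoc, e3]

theorem swap_comm_theta {n : ℕ} (hn : 3 < n)
    (ψ : Equiv.Perm (Fin n) →* BrauerMonoid n)
    (hψ : ∀ i : Fin (n - 1), ψ (sPerm i) = σB i) (a : ℕ) (ha : 2 ≤ a) (d : ℕ) :
    ∀ hb : a + d < n,
    Commute (ψ (Equiv.swap ⟨a, by omega⟩ ⟨a + d, hb⟩)) (θB ⟨0, by omega⟩) := by
  induction d with
  | zero => intro hb; simp only [Nat.add_zero, Equiv.swap_self]
            change Commute (ψ 1) _
            rw [map_one]; exact Commute.one_left _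
  | succ d ih =>
    intro hb
    have hs : Commute (ψ (sPerm ⟨a + d, by omega⟩)) (θB (n := n) ⟨0, by omega⟩) := by
      rw [hψ]
      refine (rel_eq (BrauerRel.theta_sigma_comm ⟨0, by omega⟩ ⟨a+d, by omega⟩ ?_)).symm
      simp [Nat.dist]; omega
    rcases Nat.eq_zero_or_pos d with rfl | hd
    · exact hs
    · have ih' := ih (by omega)
      have : Equiv.swap (⟨a, by omega⟩ : Fin n) ⟨a + (d + 1), hb⟩ =
          sPerm ⟨a + d, by omega⟩ * Equiv.swap ⟨a, by omega⟩ ⟨a + d, by omega⟩ *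
            sPerm ⟨a + d, by omega⟩ := by
        unfold sPerm
        rw [Equiv.swap_comm (⟨a, _⟩ : Fin n) ⟨a + d, _⟩, Equiv.swap_comm (lo _) (hi _)]
        have := Equiv.swap_mul_swap_mul_swap (x := (⟨a, by omega⟩ : Fin n))
          (y := ⟨a + d, by omega⟩) (z := ⟨a + (d + 1), hb⟩)
          (by simp; omega) (by simp)
        rw [Equiv.swap_comm]
        rw [← this, Equiv.swap_comm (⟨a, _⟩ : Fin n) ⟨a + d, _⟩,
          Equiv.swap_comm (⟨a + d, _⟩ : Fin n) ⟨a + (d + 1), _⟩]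
        rfl
      rw [this, map_mul, map_mul]
      exact (hs.mul_left ih').mul_left hs

theorem swap_comm_theta2 {n : ℕ} (hn : 3 < n)
    (ψ : Equiv.Perm (Fin n) →* BrauerMonoid n)
    (hψ : ∀ i : Fin (n - 1), ψ (sPerm i) = σB i) (a b : Fin n) (ha : 2 ≤ a.1) (hb : 2 ≤ b.1) :
    Commute (ψ (Equiv.swap a b)) (θB ⟨0, by omega⟩) := by
  wlog hab : a.1 ≤ b.1 generalizing a b
  · rw [Equiv.swap_comm]; exact this b a hb ha (by omega)
  obtain ⟨a, ha'⟩ := a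
  obtain ⟨b, hb'⟩ := b
  obtain ⟨d, rfl⟩ := Nat.exists_eq_add_of_le hab
  exact swap_comm_theta hn ψ hψ a ha d hb'

theorem fix_comm_theta {n : ℕ} (hn : 3 < n)
    (ψ : Equiv.Perm (Fin n) →* BrauerMonoid n)
    (hψ : ∀ i : Fin (n - 1), ψ (sPerm i) = σB i) (g : Equiv.Perm (Fin n))
    (h0 : g ⟨0, by omega⟩ = ⟨0, by omega⟩) (h1 : g ⟨1, by omega⟩ = ⟨1, by omega⟩) :
    Commute (ψ g) (θB ⟨0, by omega⟩) := by
  have key : ∀ k : Equiv.Perm {x : Fin n // 2 ≤ x.1},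
      Commute (ψ (Equiv.Perm.ofSubtype k)) (θB ⟨0, by omega⟩) := by
    intro k
    induction k using Equiv.Perm.swap_induction_on with
    | one => rw [map_one, map_one]; exact Commute.one_left _
    | swap_mul f x y hxy ih =>
      rw [map_mul, map_mul, Equiv.Perm.ofSubtype_swap_eq]
      exact (swap_comm_theta2 hn ψ hψ _ _ x.2 y.2).mul_left ih
  have small : ∀ x : Fin n, ¬ 2 ≤ x.1 → g x = x := by
    intro x hx
    have : x = ⟨0, by omega⟩ ∨ x = ⟨1, by omega⟩ := by
      simp only [Fin.ext_iff]; omega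
    rcases this with e | e
    · rw [e]; exact h0
    · rw [e]; exact h1
  have hp : ∀ x : Fin n, 2 ≤ (g x).1 ↔ 2 ≤ x.1 := by
    intro x
    constructor
    · intro h; by_contra hx; rw [small x hx] at h; exact hx h
    · intro h; by_contra hx
      have := g.injective (small _ hx)
      rw [this] at hx; exact hx h
  have := key (g.subtypePerm hp)
  rwa [Equiv.Perm.ofSubtype_subtypePerm] at this
  intro x hx
  by_contra h
  exact hx (small x h)

theorem psi_conj_mul {n : ℕ} (ψ : Equiv.Perm (Fin n) →* BrauerMonoid n) (t : BrauerMonoid n)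
    (g u : Equiv.Perm (Fin n)) (hg : Commute (ψ g) t) :
    ψ (g * u)⁻¹ * t * ψ (g * u) = ψ u⁻¹ * t * ψ u := by
  have e : ψ g⁻¹ * ψ g = 1 := by rw [← map_mul, inv_mul_cancel, map_one]
  calc _ = ψ u⁻¹ * (ψ g⁻¹ * (t * ψ g)) * ψ u := by
        rw [mul_inv_rev, map_mul, map_mul]; simp only [mul_assoc]
    _ = ψ u⁻¹ * ((ψ g⁻¹ * ψ g) * t) * ψ u := by rw [← hg.eq]; simp only [mul_assoc]
    _ = _ := by rw [e, one_mul]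

/-- Lemma `lemma203` of Kudryavtseva–Mazorchuk: if `w({1,2}) ∩ v({1,2}) = ∅` then the
conjugates `ψ(w⁻¹) θ_1 ψ(w)` and `ψ(v⁻¹) θ_1 ψ(v)` commute.  (The symmetric group acts on
`{1, …, n}` on the *right*, so `w({1,2})` is the image of `{1,2}` under `⇑w⁻¹` in terms of
Mathlib's left-composition convention for `Equiv.Perm`.) -/
theorem brauer_eps_commute (n : ℕ) (hn : 4 ≤ n)
    (ψ : Equiv.Perm (Fin n) →* BrauerMonoid n)
    (hψ : ∀ i : Fin (n - 1), ψ (sPerm i) = σB i)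
    (w v : Equiv.Perm (Fin n))
    (h : ⇑w⁻¹ '' ({⟨0, by omega⟩, ⟨1, by omega⟩} : Set (Fin n)) ∩
         ⇑v⁻¹ '' ({⟨0, by omega⟩, ⟨1, by omega⟩} : Set (Fin n)) = ∅) :
    Commute (ψ w⁻¹ * θB ⟨0, by omega⟩ * ψ w) (ψ v⁻¹ * θB ⟨0, by omega⟩ * ψ v) := by
  obtain ⟨x, hx⟩ : ∃ x, x = w * v⁻¹ := ⟨_, rfl⟩
  have big : ∀ p : Fin n, p.1 < 2 → 2 ≤ (x p).1 := by
    intro p hp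
    by_contra hlt
    have mem : ∀ q : Fin n, q.1 < 2 →
        q ∈ ({⟨0, by omega⟩, ⟨1, by omega⟩} : Set (Fin n)) := by
      intro q hq
      simp only [Set.mem_insert_iff, Set.mem_singleton_iff, Fin.ext_iff]; omega
    have : v⁻¹ p ∈ (∅ : Set (Fin n)) := by
      rw [← h]
      refine ⟨⟨x p, mem _ (by omega), ?_⟩, ⟨p, mem _ hp, rfl⟩⟩
      rw [hx]; simp
    exact this
  have b0 := big ⟨0, by omega⟩ (by simp)
  have b1 := big ⟨1, by omega⟩ (by simp)
  have hne : x ⟨1, by omega⟩ ≠ x ⟨0, by omega⟩ := by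
    intro h; simpa using x.injective h
  obtain ⟨y, hy⟩ : ∃ y, y = Equiv.swap (x ⟨0, by omega⟩) ⟨2, by omega⟩ (x ⟨1, by omega⟩) :=
    ⟨_, rfl⟩
  have hy2 : 2 ≤ y.1 ∧ y ≠ ⟨2, by omega⟩ := by
    constructor
    · rw [hy, Equiv.swap_apply_def]; split_ifs
      · simp
      · exact b0
      · exact b1
    · intro h'
      rw [hy] at h'
      have h2 : Equiv.swap (x ⟨0, by omega⟩) ⟨2, by omega⟩ (x ⟨0, by omega⟩) =
        (⟨2, by omega⟩ : Fin n) := Equiv.swap_apply_left _ _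
      exact hne ((Equiv.swap _ _).injective (h'.trans h2.symm))
  obtain ⟨k, hk⟩ : ∃ k : Equiv.Perm (Fin n), k = Equiv.swap y ⟨3, by omega⟩ *
      Equiv.swap (x ⟨0, by omega⟩) ⟨2, by omega⟩ := ⟨_, rfl⟩
  have kc : Commute (ψ k) (θB ⟨0, by omega⟩) := by
    rw [hk, map_mul]
    exact (swap_comm_theta2 hn ψ hψ _ _ hy2.1 (by simp)).mul_left
      (swap_comm_theta2 hn ψ hψ _ _ b0 (by simp))
  have k0 : k (x ⟨0, by omega⟩) = ⟨2, by omega⟩ := by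
    rw [hk, Equiv.Perm.mul_apply, Equiv.swap_apply_left]
    exact Equiv.swap_apply_of_ne_of_ne hy2.2.symm (by simp)
  have k1 : k (x ⟨1, by omega⟩) = ⟨3, by omega⟩ := by
    rw [hk, Equiv.Perm.mul_apply, ← hy, Equiv.swap_apply_left]
  obtain ⟨i0, hi0⟩ : ∃ i : Fin (n-1), i = ⟨0, by omega⟩ := ⟨_, rfl⟩
  obtain ⟨i1, hi1⟩ : ∃ i : Fin (n-1), i = ⟨1, by omega⟩ := ⟨_, rfl⟩
  obtain ⟨i2, hi2⟩ : ∃ i : Fin (n-1), i = ⟨2, by omega⟩ := ⟨_, rfl⟩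
  obtain ⟨c, hc⟩ : ∃ c : Equiv.Perm (Fin n),
    c = sPerm i1 * sPerm i0 * sPerm i2 * sPerm i1 := ⟨_, rfl⟩
  have inv : ∀ i : Fin (n-1), (sPerm i)⁻¹ = sPerm i := fun i => Equiv.swap_inv _ _
  have hci : c⁻¹ = sPerm i1 * sPerm i2 * sPerm i0 * sPerm i1 := by
    rw [hc]; simp only [mul_inv_rev, inv, mul_assoc]
  have c2 : c ⟨2, by omega⟩ = ⟨0, by omega⟩ := by
    rw [hc, hi0, hi1, hi2]
    simp [sPerm, lo, hi, Equiv.swap_apply_def]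
  have c3 : c ⟨3, by omega⟩ = ⟨1, by omega⟩ := by
    rw [hc, hi0, hi1, hi2]
    simp [sPerm, lo, hi, Equiv.swap_apply_def]
  have ct : ψ c⁻¹ * θB i0 * ψ c = θB i2 := by
    rw [hci, hc]
    simp only [map_mul, hψ]
    rw [← theta_conj i1 i2 (by rw [hi1, hi2]; rfl), ← theta_conj i0 i1 (by rw [hi1, hi0]; rfl)]
    have cm : σB i0 * σB i2 = σB i2 * σB i0 :=
      rel_eq (BrauerRel.sigma_comm i0 i2 (by rw [hi0, hi2]; simp [Nat.dist]))
    simp only [mul_assoc]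
  obtain ⟨g, hg⟩ : ∃ g, g = c * k * x := ⟨_, rfl⟩
  have gc : Commute (ψ g) (θB ⟨0, by omega⟩) := by
    apply fix_comm_theta hn ψ hψ
    · rw [hg]; simp [k0, c2]
    · rw [hg]; simp [k1, c3]
  have hv : g * v = c * (k * w) := by rw [hg, hx]; group
  rw [← psi_conj_mul ψ _ k w kc, ← psi_conj_mul ψ _ g v gc, hv, ← hi0]
  have e : ψ (c * (k * w))⁻¹ * θB i0 * ψ (c * (k * w)) =
      ψ (k * w)⁻¹ * θB i2 * ψ (k * w) := by
    rw [← ct, mul_inv_rev c, map_mul, map_mul ψ c]; simp only [mul_assoc]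
  rw [e]
  have tc : θB i0 * θB i2 = θB i2 * θB i0 :=
    rel_eq (BrauerRel.theta_comm i0 i2 (by rw [hi0, hi2]; simp [Nat.dist]))
  generalize k * w = u
  have e : ψ u * ψ u⁻¹ = 1 := by rw [← map_mul, mul_inv_cancel, map_one]
  have m : ∀ s t : BrauerMonoid n, (ψ u⁻¹ * s * ψ u) * (ψ u⁻¹ * t * ψ u) =
      ψ u⁻¹ * (s * t) * ψ u := by
    intro s t
    calc _ = ψ u⁻¹ * s * (ψ u * ψ u⁻¹) * t * ψ u := by simp only [mul_assoc]
      _ = _ := by rw [e, mul_one]; simp only [mul_assoc]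
  change _ * _ = _ * _
  rw [m, m, tc]
end

section
/- Let ψ : Perm(Fin n) → T be the monoid homomorphism with ψ(s_i) = σ_i, and for 0 ≤ k ≤ ⌊n/2⌋ let δ_k = θ_1θ_3⋯θ_{2k−1} (with δ_0 = 1). Then every element x ∈ T can be written as x = ψ(w)·δ_k·ψ(v) for some permutations w, v ∈ Perm(Fin n) and some k with 0 ≤ k ≤ ⌊n/2⌋. -/
/-- The canonical element `δ_k = θ_1 θ_3 ⋯ θ_{2k-1}` of `T` (with `δ_0 = 1`),
for `0 ≤ k ≤ ⌊n/2⌋`. -/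
def δB (n : ℕ) (k : ℕ) (hk : k ≤ n / 2) : BrauerMonoid n :=
  (List.ofFn fun j : Fin k => θB (n := n) ⟨2 * j.1, by have := j.2; omega⟩).prod

namespace BrauerAux

theorem rel_eq {n : ℕ} {a b : FreeMonoid (BrauerGen n)} (h : BrauerRel n a b) :
    PresentedMonoid.mk (BrauerRel n) a = PresentedMonoid.mk (BrauerRel n) b :=
  (PresentedMonoid.mk_eq_mk_iff).2 (ConGen.Rel.of _ _ h)

theorem ss {n : ℕ} (i : Fin (n - 1)) : σB i * σB i = 1 := rel_eq (.sigma_sq i)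
theorem tt {n : ℕ} (i : Fin (n - 1)) : θB i * θB i = θB i := rel_eq (.theta_idem i)
theorem tcomm {n : ℕ} (i j : Fin (n - 1)) (h : 1 < Nat.dist i.1 j.1) :
    θB i * θB j = θB j * θB i := rel_eq (.theta_comm i j h)
theorem ts {n : ℕ} (i : Fin (n - 1)) : θB i * σB i = θB i := rel_eq (.theta_sigma i)
theorem st {n : ℕ} (i : Fin (n - 1)) : σB i * θB i = θB i := rel_eq (.sigma_theta i)
theorem tscomm {n : ℕ} (i j : Fin (n - 1)) (h : 1 < Nat.dist i.1 j.1) :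
    θB i * σB j = σB j * θB i := rel_eq (.theta_sigma_comm i j h)
theorem stt {n : ℕ} (i j : Fin (n - 1)) (h : Nat.dist i.1 j.1 = 1) :
    σB i * θB j * θB i = σB j * θB i := rel_eq (.sigma_theta_theta i j h)
theorem tts {n : ℕ} (i j : Fin (n - 1)) (h : Nat.dist i.1 j.1 = 1) :
    θB i * θB j * σB i = θB i * σB j := rel_eq (.theta_theta_sigma i j h)

theorem tt_eq {n : ℕ} (i j : Fin (n - 1)) (h : Nat.dist i.1 j.1 = 1) :
    θB i * θB j = θB i * (σB j * σB i) := by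
  rw [← mul_assoc, ← tts i j h, mul_assoc, ss, mul_one]

theorem tt_eq' {n : ℕ} (i j : Fin (n - 1)) (h : Nat.dist i.1 j.1 = 1) :
    θB j * θB i = σB i * σB j * θB i := by
  rw [mul_assoc, ← stt i j h, ← mul_assoc, ← mul_assoc, ss, one_mul]

theorem mem_of_fix {n : ℕ} (S : Subgroup (Equiv.Perm (Fin n))) (m : ℕ)
    (hS : ∀ i : Fin (n - 1), m ≤ i.1 → sPerm i ∈ S)
    (g : Equiv.Perm (Fin n)) (hg : ∀ x : Fin n, x.1 < m → g x = x) : g ∈ S := by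
  have h1 : ∀ d : ℕ, ∀ a b : Fin n, m ≤ a.1 → b.1 = a.1 + 1 + d → Equiv.swap a b ∈ S := by
    intro d
    induction d with
    | zero =>
      intro a b ha hb
      have := hS ⟨a.1, by have := b.2; omega⟩ ha
      convert this using 1
      unfold sPerm
      congr 1
      apply Fin.ext
      simpa [hi] using hb
    | succ d ih =>
      intro a b ha hb
      have hb2 := b.2
      let c : Fin n := ⟨a.1 + 1 + d, by omega⟩
      have e1 := ih a c ha rfl
      have e2 : Equiv.swap c b ∈ S := by
        have := hS ⟨c.1, by simp only [c]; omega⟩ (by simp only [c]; omega)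
        convert this using 1
        unfold sPerm
        congr 1
        apply Fin.ext
        simp [hi, c]; omega
      have hac : a ≠ c := by
        intro h; have := congrArg Fin.val h; simp only [c] at this; omega
      have hab : a ≠ b := by
        intro h; have := congrArg Fin.val h; omega
      have e3 : Equiv.swap a b = Equiv.swap c b * Equiv.swap a c * (Equiv.swap c b)⁻¹ := by
        rw [← Equiv.swap_apply_apply, Equiv.swap_apply_left, Equiv.swap_apply_of_ne_of_ne hac hab]
      rw [e3]
      exact S.mul_mem (S.mul_mem e2 e1) (S.inv_mem e2)
  have h2 : ∀ a b : Fin n, m ≤ a.1 → m ≤ b.1 → a ≠ b → Equiv.swap a b ∈ S := by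
    intro a b ha hb hab
    have : a.1 ≠ b.1 := fun h => hab (Fin.ext h)
    rcases lt_or_gt_of_ne this with h | h
    · exact h1 (b.1 - a.1 - 1) a b ha (by omega)
    · rw [Equiv.swap_comm]
      exact h1 (a.1 - b.1 - 1) b a hb (by omega)
  let p : Fin n → Prop := fun x => m ≤ x.1
  have hp : ∀ x, g x ≠ x → p x := by
    intro x hx
    by_contra h
    exact hx (hg x (by simpa [p] using h))
  have hp' : ∀ x, p (g x) ↔ p x := by
    intro x
    by_cases h : g x = x
    · rw [h]
    · refine ⟨fun _ => hp x h, fun _ => hp _ fun h' => h (g.injective h')⟩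
  have htop : S.comap (Equiv.Perm.ofSubtype (p := p)) = ⊤ := by
    rw [eq_top_iff, ← Equiv.Perm.closure_isSwap, Subgroup.closure_le]
    rintro f ⟨a, b, hab, rfl⟩
    simp only [Subgroup.coe_comap, Set.mem_preimage, SetLike.mem_coe,
      Equiv.Perm.ofSubtype_swap_eq]
    exact h2 a b a.2 b.2 (fun h => hab (Subtype.ext h))
  have : g.subtypePerm hp' ∈ S.comap (Equiv.Perm.ofSubtype (p := p)) := by
    rw [htop]; trivial
  rw [Subgroup.mem_comap, Equiv.Perm.ofSubtype_subtypePerm hp' hp] at this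
  exact this

/-- permutations whose image commutes with `t` -/
def cen {n : ℕ} (ψ : Equiv.Perm (Fin n) →* BrauerMonoid n) (t : BrauerMonoid n) :
    Subgroup (Equiv.Perm (Fin n)) where
  carrier := {g | ψ g * t = t * ψ g}
  one_mem' := by simp
  mul_mem' := by
    intro a b ha hb
    simp only [Set.mem_ofPred_eq, map_mul] at *
    rw [mul_assoc, hb, ← mul_assoc, ha, mul_assoc]
  inv_mem' := by
    intro a ha
    simp only [Set.mem_ofPred_eq] at *
    have e1 : ψ a⁻¹ * ψ a = 1 := by rw [← map_mul]; simp
    have e2 : ψ a * ψ a⁻¹ = 1 := by rw [← map_mul]; simp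
    calc ψ a⁻¹ * t = ψ a⁻¹ * t * (ψ a * ψ a⁻¹) := by rw [e2, mul_one]
      _ = ψ a⁻¹ * (t * ψ a) * ψ a⁻¹ := by simp only [mul_assoc]
      _ = (ψ a⁻¹ * ψ a) * t * ψ a⁻¹ := by rw [← ha]; simp only [mul_assoc]
      _ = t * ψ a⁻¹ := by rw [e1, one_mul]

theorem mem_cen {n : ℕ} {ψ : Equiv.Perm (Fin n) →* BrauerMonoid n} {t : BrauerMonoid n}
    {g : Equiv.Perm (Fin n)} : g ∈ cen ψ t ↔ ψ g * t = t * ψ g := Iff.rfl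

section
variable {n : ℕ} (ψ : Equiv.Perm (Fin n) →* BrauerMonoid n)
    (hψ : ∀ i : Fin (n - 1), ψ (sPerm i) = σB i)

theorem ψinv (g : Equiv.Perm (Fin n)) (x : BrauerMonoid n) : ψ g⁻¹ * (ψ g * x) = x := by
  rw [← mul_assoc, ← map_mul]; simp

theorem ψinv' (g : Equiv.Perm (Fin n)) (x : BrauerMonoid n) : ψ g * (ψ g⁻¹ * x) = x := by
  rw [← mul_assoc, ← map_mul]; simp

include hψ

theorem transport0 (d : ℕ) (hd : d < n - 1) :
    ∃ g : Equiv.Perm (Fin n), g (lo ⟨0, by omega⟩) = lo ⟨d, hd⟩ ∧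
      g (hi ⟨0, by omega⟩) = hi ⟨d, hd⟩ ∧ ψ g * θB ⟨0, by omega⟩ = θB ⟨d, hd⟩ * ψ g := by
  induction d with
  | zero => exact ⟨1, rfl, rfl, by simp⟩
  | succ d ih =>
    obtain ⟨g, h1, h2, h3⟩ := ih (by omega)
    let i : Fin (n - 1) := ⟨d, by omega⟩
    let j : Fin (n - 1) := ⟨d + 1, hd⟩
    refine ⟨sPerm i * sPerm j * g, ?_, ?_, ?_⟩
    · simp only [Equiv.Perm.mul_apply, h1, sPerm]
      simp only [Equiv.swap_apply_def, lo, hi, i, j, Fin.ext_iff]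
      grind
    · simp only [Equiv.Perm.mul_apply, h2, sPerm]
      simp only [Equiv.swap_apply_def, lo, hi, i, j, Fin.ext_iff]
      grind
    · have hij : Nat.dist i.1 j.1 = 1 := by simp [i, j, Nat.dist]
      have hji : Nat.dist j.1 i.1 = 1 := by simp [i, j, Nat.dist]
      simp only [map_mul, hψ]
      rw [mul_assoc, h3, ← mul_assoc]
      change σB i * σB j * θB i * ψ g = θB j * (σB i * σB j * ψ g)
      rw [← tt_eq' i j hij, tt_eq j i hji]
      simp only [mul_assoc]

theorem transport (i j : Fin (n - 1)) (g : Equiv.Perm (Fin n)) (h1 : g (lo i) = lo j)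
    (h2 : g (hi i) = hi j) : ψ g * θB i = θB j * ψ g := by
  obtain ⟨a, a1, a2, a3⟩ := transport0 ψ hψ i.1 i.2
  obtain ⟨b, b1, b2, b3⟩ := transport0 ψ hψ j.1 j.2
  set z : Fin (n - 1) := ⟨0, by have := i.2; omega⟩ with hz
  have hc : b⁻¹ * g * a ∈ cen ψ (θB z) := by
    apply mem_of_fix _ 2
    · intro k hk
      rw [mem_cen, hψ, tscomm]
      simp only [hz, Nat.dist]; omega
    · intro x hx
      simp only [Equiv.Perm.mul_apply]
      rw [Equiv.Perm.inv_eq_iff_eq]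
      have : x = lo z ∨ x = hi z := by
        simp only [lo, hi, hz, Fin.ext_iff]; omega
      rcases this with rfl | rfl
      · rw [a1, b1]; exact h1
      · rw [a2, b2]; exact h2
  rw [mem_cen] at hc
  have e : g = b * (b⁻¹ * g * a) * a⁻¹ := by group
  have a4 : ψ a⁻¹ * θB i = θB z * ψ a⁻¹ := by
    have : θB i = θB i * ψ a * ψ a⁻¹ := by rw [mul_assoc, ← map_mul]; simp
    rw [this, ← a3, mul_assoc, ψinv]
  rw [e, map_mul, map_mul ψ b, mul_assoc, a4, mul_assoc, ← mul_assoc _ (θB z), hc]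
  simp only [← mul_assoc]
  rw [b3]

theorem transport' (i j : Fin (n - 1)) (g : Equiv.Perm (Fin n))
    (h : (g (lo i) = lo j ∧ g (hi i) = hi j) ∨ (g (lo i) = hi j ∧ g (hi i) = lo j)) :
    ψ g * θB i = θB j * ψ g := by
  rcases h with ⟨h1, h2⟩ | ⟨h1, h2⟩
  · exact transport ψ hψ i j g h1 h2
  · have := transport ψ hψ i j (sPerm j * g) (by simp [h1, sPerm]) (by simp [h2, sPerm])
    rw [map_mul, hψ, ← mul_assoc, ts, mul_assoc] at this
    have h3 := congrArg (σB j * ·) this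
    simp only [← mul_assoc, ss, st, one_mul] at h3
    exact h3

/-- key step with explicit adjacent edge -/
theorem absorb_adj (m p i : Fin (n - 1)) (hmp : Nat.dist m.1 p.1 = 1) (q r t : Fin n)
    (hm : (lo m = q ∧ hi m = r) ∨ (lo m = r ∧ hi m = q))
    (hp : (lo p = q ∧ hi p = t) ∨ (lo p = t ∧ hi p = q))
    (hqr : q ≠ r) (hqt : q ≠ t) (hrt : r ≠ t)
    (v : Equiv.Perm (Fin n)) (a b : Fin n)
    (hv : (v (lo i) = a ∧ v (hi i) = b) ∨ (v (lo i) = b ∧ v (hi i) = a))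
    (ha : a = q ∨ a = r) (hb : b ≠ q ∧ b ≠ r) :
    ∃ u : Equiv.Perm (Fin n), θB m * ψ v * θB i = θB m * ψ u := by
  let g : Equiv.Perm (Fin n) := Equiv.swap t b * Equiv.swap q a
  have gq : g q = a := by
    simp only [g, Equiv.Perm.mul_apply, Equiv.swap_apply_def]; grind
  have gt : g t = b := by
    simp only [g, Equiv.Perm.mul_apply, Equiv.swap_apply_def]; grind
  have gr : (a = q ∧ g r = r) ∨ (a = r ∧ g r = q) := by
    simp only [g, Equiv.Perm.mul_apply, Equiv.swap_apply_def]; grind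
  have g1 : ψ g * θB m = θB m * ψ g := by
    apply transport' ψ hψ
    grind
  have g2 : ψ (g⁻¹ * v) * θB i = θB p * ψ (g⁻¹ * v) := by
    apply transport' ψ hψ
    simp only [Equiv.Perm.mul_apply, Equiv.Perm.inv_eq_iff_eq]
    grind
  clear_value g
  refine ⟨g * (sPerm p * sPerm m) * (g⁻¹ * v), ?_⟩
  have e : v = g * (g⁻¹ * v) := by group
  calc θB m * ψ v * θB i = θB m * ψ g * (ψ (g⁻¹ * v) * θB i) := by
        conv_lhs => rw [e, map_mul]
        simp only [mul_assoc]
    _ = ψ g * (θB m * θB p) * ψ (g⁻¹ * v) := by rw [g2, ← g1]; simp only [mul_assoc]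
    _ = (ψ g * θB m) * (σB p * σB m) * ψ (g⁻¹ * v) := by
        rw [tt_eq m p hmp]; simp only [mul_assoc]
    _ = _ := by rw [g1]; simp only [map_mul, hψ, mul_assoc]

theorem absorb (m i : Fin (n - 1))
    (v : Equiv.Perm (Fin n)) (a b : Fin n)
    (hv : (v (lo i) = a ∧ v (hi i) = b) ∨ (v (lo i) = b ∧ v (hi i) = a))
    (ha : a = lo m ∨ a = hi m) (hb : b ≠ lo m ∧ b ≠ hi m) :
    ∃ u : Equiv.Perm (Fin n), θB m * ψ v * θB i = θB m * ψ u := by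
  have hm2 := m.2
  by_cases h : m.1 + 1 < n - 1
  · refine absorb_adj ψ hψ m ⟨m.1 + 1, h⟩ i (by simp [Nat.dist]) (hi m) (lo m)
      (hi ⟨m.1 + 1, h⟩) (by simp) (by simp [lo, hi]) ?_ ?_ ?_ v a b hv ha.symm hb.symm
    all_goals simp only [lo, hi, ne_eq, Fin.ext_iff]; omega
  · have h0 : 0 < m.1 := by
      by_contra h0
      have := b.2
      simp only [lo, hi, ne_eq, Fin.ext_iff] at hb
      omega
    refine absorb_adj ψ hψ m ⟨m.1 - 1, by omega⟩ i (by simp [Nat.dist]; omega) (lo m) (hi m)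
      (lo ⟨m.1 - 1, by omega⟩) (by simp) (Or.inr ⟨rfl, ?_⟩) ?_ ?_ ?_ v a b hv ha hb
    all_goals simp only [lo, hi, ne_eq, Fin.ext_iff]; omega

end

theorem delta_succ (n k : ℕ) (hk : k + 1 ≤ n / 2) :
    δB n (k + 1) hk = δB n k (by omega) * θB ⟨2 * k, by omega⟩ := by
  unfold δB
  rw [List.ofFn_succ', List.concat_eq_append, List.prod_append]
  simp

theorem delta_absorb (n k : ℕ) (hk : k ≤ n / 2) (j : ℕ) (hj : j < k) :
    δB n k hk * θB ⟨2 * j, by omega⟩ = δB n k hk := by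
  induction k with
  | zero => omega
  | succ k ih =>
    rw [delta_succ]
    by_cases h : j = k
    · subst h; rw [mul_assoc, tt]
    · rw [mul_assoc, tcomm, ← mul_assoc, ih (by omega) (by omega)]
      simp only [Nat.dist]; omega

theorem delta_comm {n : ℕ} (ψ : Equiv.Perm (Fin n) →* BrauerMonoid n)
    (hψ : ∀ i : Fin (n - 1), ψ (sPerm i) = σB i) (k : ℕ) (hk : k ≤ n / 2)
    (g : Equiv.Perm (Fin n)) (hg : ∀ x : Fin n, x.1 < 2 * k → g x = x) :
    ψ g * δB n k hk = δB n k hk * ψ g := by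
  rw [← mem_cen]
  apply mem_of_fix _ (2 * k) _ g hg
  intro i hi
  clear hg
  rw [mem_cen, hψ]
  induction k with
  | zero => simp [δB]
  | succ k ih =>
    rw [delta_succ, ← mul_assoc, ih (by omega) (by omega), mul_assoc, mul_assoc, tscomm]
    simp only [Nat.dist]; omega

theorem step {n : ℕ} (ψ : Equiv.Perm (Fin n) →* BrauerMonoid n)
    (hψ : ∀ i : Fin (n - 1), ψ (sPerm i) = σB i) (k : ℕ) (hk : k ≤ n / 2)
    (v : Equiv.Perm (Fin n)) (i : Fin (n - 1)) :
    ∃ (k' : ℕ) (hk' : k' ≤ n / 2) (w u : Equiv.Perm (Fin n)),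
      δB n k hk * ψ v * θB i = ψ w * δB n k' hk' * ψ u := by
  have hne : v (lo i) ≠ v (hi i) := by
    intro h
    have := congrArg Fin.val (v.injective h)
    simp [lo, hi] at this
  have key : ∀ a b : Fin n,
      ((v (lo i) = a ∧ v (hi i) = b) ∨ (v (lo i) = b ∧ v (hi i) = a)) → a.1 < 2 * k →
      ∃ (k' : ℕ) (hk' : k' ≤ n / 2) (w u : Equiv.Perm (Fin n)),
      δB n k hk * ψ v * θB i = ψ w * δB n k' hk' * ψ u := by
    intro a b hv ha
    have hab : a ≠ b := by grind
    let m : Fin (n - 1) := ⟨2 * (a.1 / 2), by omega⟩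
    have hd : δB n k hk * θB m = δB n k hk := delta_absorb n k hk (a.1 / 2) (by omega)
    have ham : a = lo m ∨ a = hi m := by
      simp only [lo, hi, m, Fin.ext_iff]; omega
    by_cases hb : b = lo m ∨ b = hi m
    · refine ⟨k, hk, 1, v, ?_⟩
      have := transport' ψ hψ i m v (by grind)
      rw [mul_assoc, this, ← mul_assoc, hd, map_one, one_mul]
    · obtain ⟨u, hu⟩ := absorb ψ hψ m i v a b hv ham (by grind)
      refine ⟨k, hk, 1, u, ?_⟩
      rw [map_one, one_mul, ← hd, mul_assoc, mul_assoc, mul_assoc, ← mul_assoc (θB m) (ψ v), hu]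
  by_cases h1 : (v (lo i)).1 < 2 * k
  · exact key _ _ (Or.inl ⟨rfl, rfl⟩) h1
  by_cases h2 : (v (hi i)).1 < 2 * k
  · exact key _ _ (Or.inr ⟨rfl, rfl⟩) h2
  generalize ha : v (lo i) = a at *
  generalize hb : v (hi i) = b at *
  have hab : a.1 ≠ b.1 := fun h => hne (Fin.ext h)
  have ha2 := a.2
  have hb2 := b.2
  have hk' : k + 1 ≤ n / 2 := by omega
  let m : Fin (n - 1) := ⟨2 * k, by omega⟩
  have hm : lo m ≠ hi m := by simp [lo, hi]
  have hm1 : (lo m).1 = 2 * k := rfl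
  have hm2 : (hi m).1 = 2 * k + 1 := rfl
  let g : Equiv.Perm (Fin n) :=
    Equiv.swap (lo m) a * Equiv.swap (hi m) (Equiv.swap (lo m) a b)
  have g1 : g (lo m) = a := by
    simp only [g, Equiv.Perm.mul_apply, Equiv.swap_apply_def]; grind
  have g2 : g (hi m) = b := by
    simp [g, Equiv.Perm.mul_apply]
  have g3 : ∀ x : Fin n, x.1 < 2 * k → g x = x := by
    intro x hx
    simp only [g, Equiv.Perm.mul_apply, Equiv.swap_apply_def]; grind
  have e1 := delta_comm ψ hψ k hk g g3
  have e2 : ψ (g⁻¹ * v) * θB i = θB m * ψ (g⁻¹ * v) := by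
    apply transport ψ hψ
    · simp only [Equiv.Perm.mul_apply, Equiv.Perm.inv_eq_iff_eq]; rw [ha, g1]
    · simp only [Equiv.Perm.mul_apply, Equiv.Perm.inv_eq_iff_eq]; rw [hb, g2]
  refine ⟨k + 1, hk', g, g⁻¹ * v, ?_⟩
  have e : v = g * (g⁻¹ * v) := by group
  calc δB n k hk * ψ v * θB i = δB n k hk * ψ g * (ψ (g⁻¹ * v) * θB i) := by
        conv_lhs => rw [e, map_mul]
        simp only [mul_assoc]
    _ = _ := by rw [e2, ← e1, delta_succ]; simp only [mul_assoc]; rfl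

end BrauerAux

/-- Lemma `lemma207` of Kudryavtseva–Mazorchuk: every element of `T` lies in the
`S_n × S_n`-orbit of a canonical element, i.e. every `x ∈ T` can be written as
`x = ψ(w) δ_k ψ(v)` with `0 ≤ k ≤ ⌊n/2⌋`. -/
theorem brauer_orbit_canonical (n : ℕ) (hn : 1 ≤ n)
    (ψ : Equiv.Perm (Fin n) →* BrauerMonoid n)
    (hψ : ∀ i : Fin (n - 1), ψ (sPerm i) = σB i)
    (x : BrauerMonoid n) :
    ∃ (k : ℕ) (hk : k ≤ n / 2) (w v : Equiv.Perm (Fin n)),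
      x = ψ w * δB n k hk * ψ v := by
  have hx : x ∈ Submonoid.closure (Set.range (PresentedMonoid.of (BrauerRel n))) := by
    rw [PresentedMonoid.closure_range_of]; trivial
  induction hx using Submonoid.closure_induction_right with
  | one => exact ⟨0, by omega, 1, 1, by simp [δB]⟩
  | mul_right x hx y hy ih =>
    obtain ⟨k, hk, w, v, rfl⟩ := ih
    obtain ⟨i | i, rfl⟩ := hy
    · refine ⟨k, hk, w, v * sPerm i, ?_⟩
      rw [map_mul, hψ, ← mul_assoc]; rfl
    · obtain ⟨k', hk', w', u, h⟩ := BrauerAux.step ψ hψ k hk v i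
      refine ⟨k', hk', w * w', u, ?_⟩
      change ψ w * δB n k hk * ψ v * θB i = _
      rw [mul_assoc, mul_assoc, ← mul_assoc (δB n k hk), h, map_mul]
      simp only [mul_assoc]
end
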